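/- The self-map g of SU(3) restricts to the squaring map on the embedded SU(2): for every B ∈ SU(2), g(ι(B)) = ι(B²). In particular g maps the subgroup ι(SU(2)) into itself. -/

import Mathlib

/-- The block-diagonal embedding on underlying matrices: `B` in the upper-left `2 × 2` block,
`1` in the `(3,3)` entry, and `0` in the remaining entries. -/
def emb (B : Matrix (Fin 2) (Fin 2) ℂ) : Matrix (Fin 3) (Fin 3) ℂ :=
  !![B 0 0, B 0 1, 0; B 1 0, B 1 1, 0; 0, 0, 1]

open ComplexConjugate

/-- The matrix formula `G(A)` from the paper, defined in terms of the entries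
`a = A₀₀`, `b = A₀₁`, `u = A₀₂`, `v = A₁₂`, `w = A₂₂` of `A` (here `|z|² = z * conj z`). -/
def Gmap (A : Matrix (Fin 3) (Fin 3) ℂ) : Matrix (Fin 3) (Fin 3) ℂ :=
  let a := A 0 0; let b := A 0 1; let u := A 0 2; let v := A 1 2; let w := A 2 2
  !![-u ^ 2 * (conj a * conj b + a * conj b) + (u * v - conj w) * (-a ^ 2 + b * conj b),
     u ^ 2 * (conj a ^ 2 - b * conj b) - (u * v - conj w) * (a * b + conj a * b),
     u * w + conj v;
     -(u * v + conj w) * (conj a * conj b + a * conj b) + v ^ 2 * (-a ^ 2 + b * conj b),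
     (u * v + conj w) * (conj a ^ 2 - b * conj b) - v ^ 2 * (a * b + conj a * b),
     v * w - conj u;
     -(u * w - conj v) * (conj a * conj b + a * conj b) + (conj u + v * w) * (-a ^ 2 + b * conj b),
     (u * w - conj v) * (conj a ^ 2 - b * conj b) - (conj u + v * w) * (a * b + conj a * b),
     w ^ 2]

/-- The self-map `g` of `SU(3)` restricts to the squaring map on the embedded
`SU(2)`: for every `B ∈ SU(2)`, `g(ι(B)) = ι(B²)`.  In particular, `g` maps the subgroup
`ι(SU(2))` into itself. -/
theorem Gmap_emb_eq_emb_sq :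
    (∀ B : Matrix (Fin 2) (Fin 2) ℂ, B ∈ Matrix.specialUnitaryGroup (Fin 2) ℂ →
      Gmap (emb B) = emb (B * B)) ∧
    ∀ A : Matrix (Fin 3) (Fin 3) ℂ,
      (∃ B ∈ Matrix.specialUnitaryGroup (Fin 2) ℂ, A = emb B) →
      ∃ C ∈ Matrix.specialUnitaryGroup (Fin 2) ℂ, Gmap A = emb C := by
  have key : ∀ B : Matrix (Fin 2) (Fin 2) ℂ, B ∈ Matrix.specialUnitaryGroup (Fin 2) ℂ →
      Gmap (emb B) = emb (B * B) := by
    intro B hB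
    obtain ⟨hU, hdet⟩ := Matrix.mem_specialUnitaryGroup_iff.mp hB
    have h1 : star B * B = 1 := Matrix.mem_unitaryGroup_iff'.mp hU
    have h2 : B.adjugate = star B := by
      calc B.adjugate = (star B * B) * B.adjugate := by rw [h1, one_mul]
        _ = star B := by rw [mul_assoc, Matrix.mul_adjugate, hdet, one_smul, mul_one]
    rw [Matrix.adjugate_fin_two] at h2
    have h11 : B 1 1 = conj (B 0 0) := by
      simpa [Matrix.star_apply] using congrFun (congrFun h2 0) 0
    have h01 : -B 1 0 = conj (B 0 1) := by
      simpa [Matrix.star_apply] using congrFun (congrFun h2 1) 0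
    have h10 : B 1 0 = -conj (B 0 1) := by rw [← h01, neg_neg]
    ext i j
    fin_cases i <;> fin_cases j <;>
      simp [Gmap, emb, Matrix.mul_apply, Fin.sum_univ_two, h11, h10] <;> ring
  refine ⟨key, ?_⟩
  rintro A ⟨B, hB, rfl⟩
  exact ⟨B * B, mul_mem hB hB, key B hB⟩
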